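/- arXiv:1806.06085 — 5 statements merged into one kernel-verified Lean document; each statement's English description precedes it below -/
import Mathlib

section
/- The determinant of the 4×4 coefficient matrix A of the hyperbolic model equals λ₁·λ₂·λ₃·λ₄; in particular, if λ₁ > 0, λ₂ > 0, λ₃ < 0 and λ₄ < 0 then A is invertible. -/
open Matrix

/-- The determinant of the coefficient matrix `A` of the hyperbolic model equals
`λ₁·λ₂·λ₃·λ₄`; in particular if `λ₁, λ₂ > 0` and `λ₃, λ₄ < 0` then `A` is invertible. -/
theorem det_A_eq_prod_lambdas (k l1 l2 l3 l4 : ℝ) (hk : k ≠ 0)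
    (A : Matrix (Fin 4) (Fin 4) ℝ)
    (hA : A = (1 / 2 : ℝ) •
      !![l1 + l4, l2 - l3, (l1 - l3) / k, (l2 - l4) / k;
         l4 - l1, l2 + l3, (l3 - l1) / k, (l2 - l4) / k;
         (l1 - l4) * k, (l3 - l2) * k, l1 + l3, l4 - l2;
         (l1 - l4) * k, (l2 - l3) * k, l1 - l3, l4 + l2]) :
    A.det = l1 * l2 * l3 * l4 ∧
      (0 < l1 → 0 < l2 → l3 < 0 → l4 < 0 → IsUnit A) := by
  have hdet : A.det = l1 * l2 * l3 * l4 := by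
    subst hA
    rw [det_smul, det_succ_row_zero]
    simp [Fin.sum_univ_succ, det_fin_three, Fin.succAbove]
    field_simp
    ring
  refine ⟨hdet, fun h1 h2 h3 h4 => ?_⟩
  rw [isUnit_iff_isUnit_det, hdet, isUnit_iff_ne_zero]
  exact mul_ne_zero (mul_ne_zero (mul_ne_zero h1.ne' h2.ne') h3.ne) h4.ne
end

section
/- (Steady state equivalence.) Let Q : ℝ → ℝ⁴ be differentiable on (0,1). Then Q satisfies the steady-state equation A·Q′(x) = B·Q(x) + F(x) for all x ∈ (0,1) if and only if: Q₃(x) = Q₁′(x) and Q₄(x) = Q₂′(x) for all x ∈ (0,1), and Q₃′(x) + k²·Q₁(x) = f_R(x) and Q₄′(x) + k²·Q₂(x) = f_I(x) for all x ∈ (0,1) — i.e. if and only if u_R := Q₁ and u_I := Q₂ give a solution u = u_R + i·u_I of the Helmholtz equation u″ + k²u = f_R + i·f_I on (0,1) with Q₃ = u_R′ and Q₄ = u_I′. -/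
open Matrix Set

/-!
With residuals `a = Q₁′ - Q₃`, `b = Q₂′ - Q₄`, `c = Q₃′ + k²Q₁ - f_R`, `d = Q₄′ + k²Q₂ - f_I`,
one has the identity `A Q′ - B Q - F = A (a, b, c, d)`, so the equivalence amounts to the
injectivity of `A`. Taking sums and differences of the rows of `A (a, b, c, d) = 0` and writing
`C = c / k`, `D = d / k`, the four upwind terms `l1 (a + C)`, `l3 (b + C)`, `l4 (a - D)` and
`l2 (b + D)` turn out to be equal to each other, while the last two are also opposite.
Hence all four vanish, and since no `lᵢ` is zero, `a = b = C = D = 0`.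
-/

/-- Injectivity of `2A`, written out by rows, with the last two unknowns already divided by `k`
and the last two rows already divided by `k`. -/
lemma upwind_kernel_trivial {l1 l2 l3 l4 a b C D : ℝ}
    (hl1 : l1 ≠ 0) (hl2 : l2 ≠ 0) (hl3 : l3 ≠ 0) (hl4 : l4 ≠ 0)
    (h1 : (l1 + l4) * a + (l2 - l3) * b + (l1 - l3) * C + (l2 - l4) * D = 0)
    (h2 : (l4 - l1) * a + (l2 + l3) * b + (l3 - l1) * C + (l2 - l4) * D = 0)
    (h3 : (l1 - l4) * a + (l3 - l2) * b + (l1 + l3) * C + (l4 - l2) * D = 0)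
    (h4 : (l1 - l4) * a + (l2 - l3) * b + (l1 - l3) * C + (l4 + l2) * D = 0) :
    a = 0 ∧ b = 0 ∧ C = 0 ∧ D = 0 := by
  have e1 : l1 * (a + C) = 0 := by linarith
  have e2 : l2 * (b + D) = 0 := by linarith
  have e3 : l3 * (b + C) = 0 := by linarith
  have e4 : l4 * (a - D) = 0 := by linarith
  have f1 := (mul_eq_zero.mp e1).resolve_left hl1
  have f2 := (mul_eq_zero.mp e2).resolve_left hl2
  have f3 := (mul_eq_zero.mp e3).resolve_left hl3
  have f4 := (mul_eq_zero.mp e4).resolve_left hl4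
  refine ⟨?_, ?_, ?_, ?_⟩ <;> linarith

/-- **Steady state equivalence.** A differentiable `Q` on `(0,1)` satisfies the
steady-state equation `A·Q′ = B·Q + F` on `(0,1)` if and only if `Q₃ = Q₁′`,
`Q₄ = Q₂′`, `Q₃′ + k²Q₁ = f_R` and `Q₄′ + k²Q₂ = f_I` on `(0,1)`, i.e. iff
`u_R := Q₁`, `u_I := Q₂` solve the Helmholtz equation with `Q₃ = u_R′`, `Q₄ = u_I′`. -/
theorem steady_state_equivalence (k l1 l2 l3 l4 : ℝ)
    (hk : 0 < k) (hl1 : 0 < l1) (hl2 : 0 < l2) (hl3 : l3 < 0) (hl4 : l4 < 0)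
    (fR fI : ℝ → ℝ)
    (A B : Matrix (Fin 4) (Fin 4) ℝ)
    (hA : A = (1 / 2 : ℝ) •
      !![l1 + l4, l2 - l3, (l1 - l3) / k, (l2 - l4) / k;
         l4 - l1, l2 + l3, (l3 - l1) / k, (l2 - l4) / k;
         (l1 - l4) * k, (l3 - l2) * k, l1 + l3, l4 - l2;
         (l1 - l4) * k, (l2 - l3) * k, l1 - l3, l4 + l2])
    (hB : B = (1 / 2 : ℝ) •
      !![(l3 - l1) * k, (l4 - l2) * k, l1 + l4, l2 - l3;
         (l1 - l3) * k, (l4 - l2) * k, l4 - l1, l2 + l3;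
         -(l1 + l3) * k ^ 2, (l2 - l4) * k ^ 2, (l1 - l4) * k, (l3 - l2) * k;
         (l3 - l1) * k ^ 2, -(l2 + l4) * k ^ 2, (l1 - l4) * k, (l2 - l3) * k])
    (F : ℝ → Fin 4 → ℝ)
    (hF : ∀ x, F x = (1 / 2 : ℝ) •
      ![(fI x * (l2 - l4) + fR x * (l1 - l3)) / k,
        (fI x * (l2 - l4) + fR x * (l3 - l1)) / k,
        fI x * (l4 - l2) + fR x * (l1 + l3),
        fI x * (l2 + l4) + fR x * (l1 - l3)])
    (Q : ℝ → Fin 4 → ℝ)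
    (hQ : ∀ x ∈ Ioo (0 : ℝ) 1, DifferentiableAt ℝ Q x) :
    (∀ x ∈ Ioo (0 : ℝ) 1, A.mulVec (deriv Q x) = B.mulVec (Q x) + F x) ↔
      ((∀ x ∈ Ioo (0 : ℝ) 1,
          Q x 2 = deriv (fun y => Q y 0) x ∧ Q x 3 = deriv (fun y => Q y 1) x) ∧
        (∀ x ∈ Ioo (0 : ℝ) 1,
          deriv (fun y => Q y 2) x + k ^ 2 * Q x 0 = fR x ∧
            deriv (fun y => Q y 3) x + k ^ 2 * Q x 1 = fI x)) := by
  rw [← forall₂_and]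
  refine forall₂_congr fun x hx => ?_
  have hk0 : k ≠ 0 := hk.ne'
  have hd : ∀ i, deriv (fun y => Q y i) x = deriv Q x i := fun i =>
    (hasDerivAt_pi.mp (hQ x hx).hasDerivAt i).deriv
  rw [hd, hd, hd, hd, hF, hA, hB]
  generalize deriv Q x = q'
  generalize Q x = q
  simp only [funext_iff, Fin.forall_fin_succ, Matrix.mulVec, dotProduct, Fin.sum_univ_four]
  simp [Matrix.vecHead, Matrix.vecTail]
  constructor
  · rintro ⟨h1, h2, h3, h4⟩
    field_simp at h1 h2 h3 h4
    obtain ⟨ha, hb, hC, hD⟩ := upwind_kernel_trivial (a := q' 0 - q 2) (b := q' 1 - q 3)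
      (C := (q' 2 + k ^ 2 * q 0 - fR x) / k) (D := (q' 3 + k ^ 2 * q 1 - fI x) / k)
      hl1.ne' hl2.ne' hl3.ne hl4.ne
      (by field_simp; linear_combination h1) (by field_simp; linear_combination h2)
      (by field_simp; linear_combination h3) (by field_simp; linear_combination h4)
    have hc := (div_eq_zero_iff.mp hC).resolve_right hk0
    have hd := (div_eq_zero_iff.mp hD).resolve_right hk0
    refine ⟨⟨?_, ?_⟩, ?_, ?_⟩ <;> linarith
  · rintro ⟨⟨h1, h2⟩, h3, h4⟩
    rw [h1, h2, ← h3, ← h4]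
    refine ⟨?_, ?_, ?_, ?_⟩ <;> field_simp <;> ring
end

section
/- (Riemann invariant transformation.) Let S ⊆ ℝ × ℝ and let Q : ℝ × ℝ → ℝ⁴ be differentiable at every point of S, and set r(t,x) = L·Q(t,x). Then Q satisfies ∂ₜQ(t,x) + A·∂ₓQ(t,x) = B·Q(t,x) + F(x) at every (t,x) ∈ S if and only if r satisfies ∂ₜr(t,x) + Λ·∂ₓr(t,x) = B_r·r(t,x) + F_r(x) at every (t,x) ∈ S. -/
open Matrix Set

/-!
The rows of `L` are left eigenvectors of `A`, so `L * A = Λ * L`. Likewise `L * B = Br * L` and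
`L *ᵥ F x = Fr x`. Since `L` is constant, it commutes with differentiation, so at each point of `S`
the residual of the system for `r` is `L` applied to the residual of the system for `Q`. As
`det L ≠ 0` for `k ≠ 0`, multiplication by `L` is injective and the two systems are equivalent
pointwise.
-/

/-- A constant matrix commutes with the Fréchet derivative of a vector-valued function. -/
lemma fderiv_mulVec_apply (L : Matrix (Fin 4) (Fin 4) ℝ) {Q : ℝ × ℝ → Fin 4 → ℝ} {p : ℝ × ℝ}
    (hQ : DifferentiableAt ℝ Q p) (v : ℝ × ℝ) :
    fderiv ℝ (fun q => L *ᵥ Q q) p v = L *ᵥ fderiv ℝ Q p v := by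
  have h := (L.mulVecLin.toContinuousLinearMap.hasFDerivAt (x := Q p)).comp p hQ.hasFDerivAt
  exact congrArg (fun T : ℝ × ℝ →L[ℝ] (Fin 4 → ℝ) => T v) h.fderiv

lemma det_riemann_ne_zero {k : ℝ} (hk : k ≠ 0) :
    (!![k, 0, 1, 0; 0, k, 0, 1; 0, k, 1, 0; -k, 0, 0, 1] : Matrix (Fin 4) (Fin 4) ℝ).det ≠ 0 := by
  have h : (!![k, 0, 1, 0; 0, k, 0, 1; 0, k, 1, 0; -k, 0, 0, 1] :
      Matrix (Fin 4) (Fin 4) ℝ).det = 2 * k ^ 2 := by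
    simp [Matrix.det_succ_row_zero, Fin.sum_univ_succ, Fin.succAbove]
    ring
  rw [h]
  positivity

/-- **Riemann invariant transformation.** For `Q` differentiable on `S ⊆ ℝ × ℝ` and
`r := L·Q`, the system `∂ₜQ + A·∂ₓQ = B·Q + F` holds on `S` if and only if the
diagonalized system `∂ₜr + Λ·∂ₓr = B_r·r + F_r` holds on `S`. -/
theorem riemann_invariant_transformation (k l1 l2 l3 l4 : ℝ)
    (hk : 0 < k) (hl1 : 0 < l1) (hl2 : 0 < l2) (hl3 : l3 < 0) (hl4 : l4 < 0)
    (fR fI : ℝ → ℝ)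
    (L Λ A B Br : Matrix (Fin 4) (Fin 4) ℝ)
    (hL : L = !![k, 0, 1, 0; 0, k, 0, 1; 0, k, 1, 0; -k, 0, 0, 1])
    (hΛ : Λ = Matrix.diagonal ![l1, l2, l3, l4])
    (hA : A = (1 / 2 : ℝ) •
      !![l1 + l4, l2 - l3, (l1 - l3) / k, (l2 - l4) / k;
         l4 - l1, l2 + l3, (l3 - l1) / k, (l2 - l4) / k;
         (l1 - l4) * k, (l3 - l2) * k, l1 + l3, l4 - l2;
         (l1 - l4) * k, (l2 - l3) * k, l1 - l3, l4 + l2])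
    (hB : B = (1 / 2 : ℝ) •
      !![(l3 - l1) * k, (l4 - l2) * k, l1 + l4, l2 - l3;
         (l1 - l3) * k, (l4 - l2) * k, l4 - l1, l2 + l3;
         -(l1 + l3) * k ^ 2, (l2 - l4) * k ^ 2, (l1 - l4) * k, (l3 - l2) * k;
         (l3 - l1) * k ^ 2, -(l2 + l4) * k ^ 2, (l1 - l4) * k, (l2 - l3) * k])
    (hBr : Br = k •
      !![0, -l1, l1, l1;
         l2, 0, -l2, l2;
         0, 0, 0, l3;
         0, 0, -l4, 0])
    (F Fr : ℝ → Fin 4 → ℝ)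
    (hF : ∀ x, F x = (1 / 2 : ℝ) •
      ![(fI x * (l2 - l4) + fR x * (l1 - l3)) / k,
        (fI x * (l2 - l4) + fR x * (l3 - l1)) / k,
        fI x * (l4 - l2) + fR x * (l1 + l3),
        fI x * (l2 + l4) + fR x * (l1 - l3)])
    (hFr : ∀ x, Fr x = ![l1 * fR x, l2 * fI x, l3 * fR x, l4 * fI x])
    (S : Set (ℝ × ℝ))
    (Q : ℝ × ℝ → Fin 4 → ℝ)
    (hQ : ∀ p ∈ S, DifferentiableAt ℝ Q p)
    (r : ℝ × ℝ → Fin 4 → ℝ)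
    (hr : ∀ p, r p = L.mulVec (Q p)) :
    (∀ p ∈ S,
        fderiv ℝ Q p (1, 0) + A.mulVec (fderiv ℝ Q p (0, 1)) =
          B.mulVec (Q p) + F p.2) ↔
      (∀ p ∈ S,
        fderiv ℝ r p (1, 0) + Λ.mulVec (fderiv ℝ r p (0, 1)) =
          Br.mulVec (r p) + Fr p.2) := by
  have hk0 : k ≠ 0 := hk.ne'
  have hLA : L * A = Λ * L := by
    subst hL hΛ hA
    ext i j
    fin_cases i <;> fin_cases j <;>
      simp [Matrix.mul_apply, Fin.sum_univ_four, Matrix.diagonal_apply] <;> field_simp <;> ring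
  have hLB : L * B = Br * L := by
    subst hL hB hBr
    ext i j
    fin_cases i <;> fin_cases j <;>
      simp [Matrix.mul_apply, Fin.sum_univ_four] <;> ring
  have hLF : ∀ x, L *ᵥ F x = Fr x := by
    intro x
    rw [hF, hFr, hL]
    ext i
    fin_cases i <;>
      simp [Matrix.mulVec, dotProduct, Fin.sum_univ_four] <;> field_simp <;> ring
  have hinj : Function.Injective L.mulVec := by
    rw [Matrix.mulVec_injective_iff_isUnit, Matrix.isUnit_iff_isUnit_det, hL]
    exact (det_riemann_ne_zero hk0).isUnit
  obtain rfl : r = fun p => L *ᵥ Q p := funext hr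
  refine forall₂_congr fun p hp => ?_
  rw [fderiv_mulVec_apply L (hQ p hp), fderiv_mulVec_apply L (hQ p hp), ← hLF,
    Matrix.mulVec_mulVec, Matrix.mulVec_mulVec, ← hLA, ← hLB, ← Matrix.mulVec_mulVec,
    ← Matrix.mulVec_mulVec, ← Matrix.mulVec_add, ← Matrix.mulVec_add]
  exact hinj.eq_iff.symm
end

section
/- Let λ < 0 be a real number and let w : ℝ × ℝ → ℝ be differentiable. Suppose ∂ₜw(t,x) + λ·∂ₓw(t,x) = 0 for every t ≥ 0 and x ∈ [0,1], and w(t,1) = 0 for every t ≥ 0. Then w(t,x) = 0 for every x ∈ [0,1] and every t ≥ (1−x)/(−λ). -/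
/-!
Since `w` has zero derivative in the direction `(1, lam)`, it is constant along the line
`s ↦ (t - s, x - lam * s)`. For `0 ≤ s ≤ (1 - x) / (-lam)` this line stays in the region
`t ≥ 0`, `0 ≤ x ≤ 1`, because `lam < 0` and `t ≥ (1 - x) / (-lam)`, and it ends on the boundary
`x = 1`, where `w` vanishes. Constancy on the segment is `constant_of_has_deriv_right_zero`.
-/

open Set

/-- Transport-equation vanishing along characteristics, leftward-moving wave:
if `λ < 0`, `w` is differentiable, `∂ₜw + λ∂ₓw = 0` for `t ≥ 0`, `x ∈ [0,1]`, and
`w(t,1) = 0` for `t ≥ 0`, then `w(t,x) = 0` for `x ∈ [0,1]` and `t ≥ (1−x)/(−λ)`. -/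
theorem transport_vanishing_left (lam : ℝ) (hlam : lam < 0)
    (w : ℝ × ℝ → ℝ) (hw : Differentiable ℝ w)
    (hpde : ∀ t ≥ (0 : ℝ), ∀ x ∈ Icc (0 : ℝ) 1,
      fderiv ℝ w (t, x) (1, 0) + lam * fderiv ℝ w (t, x) (0, 1) = 0)
    (hbc : ∀ t ≥ (0 : ℝ), w (t, 1) = 0) :
    ∀ x ∈ Icc (0 : ℝ) 1, ∀ t : ℝ, (1 - x) / (-lam) ≤ t → w (t, x) = 0 := by
  intro x hx t ht
  have hl : 0 < -lam := by linarith
  set T : ℝ := (1 - x) / (-lam) with hT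
  have hT0 : 0 ≤ T := div_nonneg (by linarith [hx.2]) hl.le
  have hTl : T * (-lam) = 1 - x := div_mul_cancel₀ _ hl.ne'
  -- The characteristic through `(t, x)`, followed backward in time; it meets `x = 1` at `s = T`.
  let γ : ℝ → ℝ × ℝ := fun s => (t - s, x - lam * s)
  have hγ (s : ℝ) : HasDerivAt γ (-1, -lam) s := by
    refine HasDerivAt.prodMk ((hasDerivAt_id s).const_sub t) ?_
    simpa using ((hasDerivAt_id s).const_mul lam).const_sub x
  have hcomp (s : ℝ) : HasDerivAt (w ∘ γ) (fderiv ℝ w (γ s) (-1, -lam)) s :=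
    (hw (γ s)).hasFDerivAt.comp_hasDerivAt s (hγ s)
  have hzero : ∀ s ∈ Ico (0 : ℝ) T, fderiv ℝ w (γ s) (-1, -lam) = 0 := by
    intro s hs
    have hdir : ((-1, -lam) : ℝ × ℝ) = -((1, 0) + lam • (0, 1)) := by
      ext <;> simp
    have hmem : x - lam * s ∈ Icc (0 : ℝ) 1 := by
      constructor <;> nlinarith [hs.1, hs.2, hx.1, mul_le_mul_of_nonneg_right hs.2.le hl.le]
    rw [hdir, map_neg, map_add, map_smul, smul_eq_mul,
      hpde (t - s) (by linarith [hs.2]) _ hmem, neg_zero]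
  have hconst := constant_of_has_deriv_right_zero (f := w ∘ γ) (a := 0) (b := T)
    (fun s _ => (hcomp s).continuousAt.continuousWithinAt)
    (fun s hs => hzero s hs ▸ (hcomp s).hasDerivWithinAt) T ⟨hT0, le_rfl⟩
  have hend : x - lam * T = 1 := by linarith
  have hb := hbc (t - T) (by linarith)
  simp only [Function.comp_apply, γ, hend, hb, mul_zero, sub_zero] at hconst
  exact hconst.symm
end

section
/- (Stationary solution of hyperbolic model in finite time.) Suppose λ₁ = λ₂ > 0 and λ₃ = λ₄ < 0. Let r : ℝ × ℝ → ℝ⁴ be twice continuously differentiable and satisfy ∂ₜr(t,x) + Λ·∂ₓr(t,x) = B_r·r(t,x) + F_r(x) for every t ≥ 0 and x ∈ [0,1], together with time-independent boundary conditions r₁(t,0) = g₀R, r₂(t,0) = g₀I, r₃(t,1) = g₁R, r₄(t,1) = g₁I for every t ≥ 0, where g₀R, g₀I, g₁R, g₁I are real constants. Then ∂ₜr(t,x) = 0 for every x ∈ [0,1] and every t ≥ 1/(−λ₃) + 1/λ₁; that is, the solution reaches steady state in finite time. -/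
/-!
Fix `h ≥ 0` and let `d(t,x) = r(t+h,x) - r(t,x)`. The source `F_r` and the boundary data do not
depend on time, so `d` solves the homogeneous system with zero boundary values. Along a
characteristic of slope `λ₃` the pair `(d₃, d₄)` is rotated by the lower right block of `B_r`, so
`d₃² + d₄²` is conserved. Tracing back to `x = 1`, where it vanishes, gives `d₃ = d₄ = 0` for
`t ≥ 1/(-λ₃)`. From that time on `(d₁, d₂)` is rotated along characteristics of slope `λ₁`, and
tracing back to `x = 0` gives `d₁ = d₂ = 0` for `t ≥ 1/(-λ₃) + 1/λ₁`. Hence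
`r(t+h,x) = r(t,x)` for all such `t` and all `h ≥ 0`, and the time derivative vanishes.

Time differences replace the time derivative so that the system need not be differentiated.
-/

open Matrix Set

/-- A solution of the rotation system `p' = -ω q`, `q' = ω p` starting at `0` stays at `0`,
since `p² + q²` is conserved. -/
lemma rotation_eq_zero {p q p' q' : ℝ → ℝ} {ω S : ℝ} (hS : 0 ≤ S)
    (hp : ∀ s ∈ Icc 0 S, HasDerivAt p (p' s) s) (hq : ∀ s ∈ Icc 0 S, HasDerivAt q (q' s) s)
    (hp' : ∀ s ∈ Icc 0 S, p' s = -(ω * q s)) (hq' : ∀ s ∈ Icc 0 S, q' s = ω * p s)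
    (hp0 : p 0 = 0) (hq0 : q 0 = 0) : p S = 0 ∧ q S = 0 := by
  have hE : ∀ s ∈ Icc 0 S, HasDerivAt (fun s => p s ^ 2 + q s ^ 2) 0 s := by
    intro s hs
    refine (((hp s hs).pow 2).add ((hq s hs).pow 2)).congr_deriv ?_
    rw [hp' s hs, hq' s hs]
    push_cast
    ring
  have h := constant_of_has_deriv_right_zero
    (fun s hs => (hE s hs).continuousAt.continuousWithinAt)
    (fun s hs => (hE s (Ico_subset_Icc_self hs)).hasDerivWithinAt) S ⟨hS, le_rfl⟩
  simp only [hp0, hq0] at h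
  constructor <;> nlinarith [sq_nonneg (p S), sq_nonneg (q S)]

lemma hasDerivAt_along_line {r : ℝ × ℝ → Fin 4 → ℝ} (hr : Differentiable ℝ r)
    (a b c s : ℝ) (i : Fin 4) :
    HasDerivAt (fun s => r (a + s, b + c * s) i)
      (fderiv ℝ r (a + s, b + c * s) (1, 0) i
        + c * fderiv ℝ r (a + s, b + c * s) (0, 1) i) s := by
  have hγ : HasDerivAt (fun s : ℝ => (a + s, b + c * s)) ((1 : ℝ), c) s := by
    have h1 : HasDerivAt (fun s : ℝ => a + s) 1 s := (hasDerivAt_id s).const_add a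
    have h2 : HasDerivAt (fun s : ℝ => b + c * s) c s := by
      simpa using ((hasDerivAt_id s).const_mul c).const_add b
    exact h1.prodMk h2
  have h := (hasDerivAt_pi.1
    ((hr (a + s, b + c * s)).hasFDerivAt.comp_hasDerivAt s hγ)) i
  refine h.congr_deriv ?_
  have : ((1 : ℝ), c) = (1, 0) + c • ((0 : ℝ), (1 : ℝ)) := by simp
  rw [this, map_add, map_smul]
  simp

/-- **Stationary solution of the hyperbolic model in finite time.** If
`λ₁ = λ₂ > 0`, `λ₃ = λ₄ < 0`, and a `C²` solution `r` of
`∂ₜr + Λ·∂ₓr = B_r·r + F_r(x)` on `t ≥ 0`, `x ∈ [0,1]` has time-independent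
boundary data, then `∂ₜr(t,x) = 0` for every `x ∈ [0,1]` and every
`t ≥ 1/(−λ₃) + 1/λ₁`: steady state is reached in finite time. -/
theorem steady_state_in_finite_time (k l1 l2 l3 l4 : ℝ) (hk : 0 < k)
    (hl12 : l1 = l2) (hl34 : l3 = l4) (hl1 : 0 < l1) (hl3 : l3 < 0)
    (fR fI : ℝ → ℝ)
    (Λ Br : Matrix (Fin 4) (Fin 4) ℝ)
    (hΛ : Λ = Matrix.diagonal ![l1, l2, l3, l4])
    (hBr : Br = k •
      !![0, -l1, l1, l1;
         l2, 0, -l2, l2;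
         0, 0, 0, l3;
         0, 0, -l4, 0])
    (Fr : ℝ → Fin 4 → ℝ)
    (hFr : ∀ x, Fr x = ![l1 * fR x, l2 * fI x, l3 * fR x, l4 * fI x])
    (g0R g0I g1R g1I : ℝ)
    (r : ℝ × ℝ → Fin 4 → ℝ) (hr : ContDiff ℝ 2 r)
    (hpde : ∀ t ≥ (0 : ℝ), ∀ x ∈ Icc (0 : ℝ) 1,
      fderiv ℝ r (t, x) (1, 0) + Λ.mulVec (fderiv ℝ r (t, x) (0, 1)) =
        Br.mulVec (r (t, x)) + Fr x)
    (hbc : ∀ t ≥ (0 : ℝ),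
      r (t, 0) 0 = g0R ∧ r (t, 0) 1 = g0I ∧ r (t, 1) 2 = g1R ∧ r (t, 1) 3 = g1I) :
    ∀ x ∈ Icc (0 : ℝ) 1, ∀ t : ℝ, 1 / (-l3) + 1 / l1 ≤ t →
      fderiv ℝ r (t, x) (1, 0) = 0 := by
  subst hl12 hl34
  have hd : Differentiable ℝ r := hr.differentiable (by norm_num)
  have hcomp : ∀ t ≥ (0 : ℝ), ∀ x ∈ Icc (0 : ℝ) 1,
      (fderiv ℝ r (t, x) (1, 0) 0 + l1 * fderiv ℝ r (t, x) (0, 1) 0 =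
        k * l1 * (-r (t, x) 1 + r (t, x) 2 + r (t, x) 3) + l1 * fR x) ∧
      (fderiv ℝ r (t, x) (1, 0) 1 + l1 * fderiv ℝ r (t, x) (0, 1) 1 =
        k * l1 * (r (t, x) 0 - r (t, x) 2 + r (t, x) 3) + l1 * fI x) ∧
      (fderiv ℝ r (t, x) (1, 0) 2 + l3 * fderiv ℝ r (t, x) (0, 1) 2 =
        k * l3 * r (t, x) 3 + l3 * fR x) ∧
      (fderiv ℝ r (t, x) (1, 0) 3 + l3 * fderiv ℝ r (t, x) (0, 1) 3 =
        -(k * l3 * r (t, x) 2) + l3 * fI x) := by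
    intro t ht x hx
    have h := hpde t ht x hx
    rw [hΛ, hBr, hFr] at h
    have h0 := congrFun h 0
    have h1 := congrFun h 1
    have h2 := congrFun h 2
    have h3 := congrFun h 3
    simp [Matrix.mulVec, dotProduct, Fin.sum_univ_four] at h0 h1 h2 h3
    refine ⟨?_, ?_, ?_, ?_⟩ <;> linarith
  have hder : ∀ h a b c s : ℝ, ∀ i : Fin 4, HasDerivAt
      (fun s => r (a + h + s, b + c * s) i - r (a + s, b + c * s) i) _ s :=
    fun h a b c s i =>
      (hasDerivAt_along_line hd (a + h) b c s i).sub (hasDerivAt_along_line hd a b c s i)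
  have stage1 : ∀ h ≥ (0 : ℝ), ∀ x ∈ Icc (0 : ℝ) 1, ∀ t : ℝ, 1 / (-l3) ≤ t →
      r (t + h, x) 2 - r (t, x) 2 = 0 ∧ r (t + h, x) 3 - r (t, x) 3 = 0 := by
    intro h hh x hx t ht
    have hl : 0 < -l3 := by linarith
    -- `S` is the travel time from the boundary `x = 1`.
    obtain ⟨S, hS⟩ : ∃ S, S = (1 - x) / (-l3) := ⟨_, rfl⟩
    have hS0 : 0 ≤ S := by rw [hS]; exact div_nonneg (by linarith [hx.2]) hl.le
    have hSt : S ≤ t := by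
      refine le_trans ?_ ht
      rw [hS]
      exact div_le_div_of_nonneg_right (by linarith [hx.1]) hl.le
    have hSx : 1 + l3 * S = x := by
      have : l3 ≠ 0 := hl3.ne
      rw [hS]
      field_simp
      ring
    have hmem : ∀ s ∈ Icc 0 S, 1 + l3 * s ∈ Icc (0 : ℝ) 1 := by
      intro s hs
      constructor <;> nlinarith [hs.1, hs.2, hx.1]
    have key := rotation_eq_zero (ω := -(k * l3)) hS0
      (fun s _ => hder h (t - S) 1 l3 s 2) (fun s _ => hder h (t - S) 1 l3 s 3)
      (by
        intro s hs
        have e1 := (hcomp (t - S + h + s) (by linarith [hs.1]) _ (hmem s hs)).2.2.1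
        have e2 := (hcomp (t - S + s) (by linarith [hs.1]) _ (hmem s hs)).2.2.1
        linarith)
      (by
        intro s hs
        have e1 := (hcomp (t - S + h + s) (by linarith [hs.1]) _ (hmem s hs)).2.2.2
        have e2 := (hcomp (t - S + s) (by linarith [hs.1]) _ (hmem s hs)).2.2.2
        linarith)
      (by
        have e1 := (hbc (t - S + h) (by linarith)).2.2.1
        have e2 := (hbc (t - S) (by linarith)).2.2.1
        simp [e1, e2])
      (by
        have e1 := (hbc (t - S + h) (by linarith)).2.2.2
        have e2 := (hbc (t - S) (by linarith)).2.2.2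
        simp [e1, e2])
    have a1 : t - S + h + S = t + h := by ring
    have a2 : t - S + S = t := by ring
    simpa only [hSx, a1, a2] using key
  have stage2 : ∀ h ≥ (0 : ℝ), ∀ x ∈ Icc (0 : ℝ) 1, ∀ t : ℝ, 1 / (-l3) + 1 / l1 ≤ t →
      r (t + h, x) 0 - r (t, x) 0 = 0 ∧ r (t + h, x) 1 - r (t, x) 1 = 0 := by
    intro h hh x hx t ht
    have hT : 0 < 1 / (-l3) := by
      have hl : 0 < -l3 := by linarith
      positivity
    -- `S` is the travel time from the boundary `x = 0`.
    obtain ⟨S, hS⟩ : ∃ S, S = x / l1 := ⟨_, rfl⟩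
    have hS0 : 0 ≤ S := by rw [hS]; exact div_nonneg hx.1 hl1.le
    have hSt : 1 / (-l3) ≤ t - S := by
      have : S ≤ 1 / l1 := by
        rw [hS]
        exact div_le_div_of_nonneg_right hx.2 hl1.le
      linarith
    have hSx : 0 + l1 * S = x := by rw [hS]; field_simp; ring
    have hmem : ∀ s ∈ Icc 0 S, 0 + l1 * s ∈ Icc (0 : ℝ) 1 := by
      intro s hs
      constructor <;> nlinarith [hs.1, hs.2, hx.2]
    have hz : ∀ s ∈ Icc 0 S,
        r (t - S + h + s, 0 + l1 * s) 2 - r (t - S + s, 0 + l1 * s) 2 = 0 ∧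
        r (t - S + h + s, 0 + l1 * s) 3 - r (t - S + s, 0 + l1 * s) 3 = 0 := by
      intro s hs
      have := stage1 h hh _ (hmem s hs) (t - S + s) (by linarith [hs.1])
      rwa [add_right_comm (t - S) s h] at this
    have key := rotation_eq_zero (ω := k * l1) hS0
      (fun s _ => hder h (t - S) 0 l1 s 0) (fun s _ => hder h (t - S) 0 l1 s 1)
      (by
        intro s hs
        have e1 := (hcomp (t - S + h + s) (by linarith [hs.1]) _ (hmem s hs)).1
        have e2 := (hcomp (t - S + s) (by linarith [hs.1]) _ (hmem s hs)).1
        obtain ⟨z1, z2⟩ := hz s hs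
        linear_combination e1 - e2 + k * l1 * z1 + k * l1 * z2)
      (by
        intro s hs
        have e1 := (hcomp (t - S + h + s) (by linarith [hs.1]) _ (hmem s hs)).2.1
        have e2 := (hcomp (t - S + s) (by linarith [hs.1]) _ (hmem s hs)).2.1
        obtain ⟨z1, z2⟩ := hz s hs
        linear_combination e1 - e2 - k * l1 * z1 + k * l1 * z2)
      (by
        have e1 := (hbc (t - S + h) (by linarith)).1
        have e2 := (hbc (t - S) (by linarith)).1
        simp [e1, e2])
      (by
        have e1 := (hbc (t - S + h) (by linarith)).2.1
        have e2 := (hbc (t - S) (by linarith)).2.1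
        simp [e1, e2])
    have a1 : t - S + h + S = t + h := by ring
    have a2 : t - S + S = t := by ring
    simpa only [hSx, a1, a2] using key
  intro x hx t ht
  have hconst : ∀ u ∈ Ici t, r (u, x) = r (t, x) := by
    intro u hu
    have hu' : 0 ≤ u - t := sub_nonneg.2 hu
    have hT : 1 / (-l3) ≤ t := by
      have : 0 < 1 / l1 := by positivity
      linarith
    have h1 := stage1 (u - t) hu' x hx t hT
    have h2 := stage2 (u - t) hu' x hx t ht
    rw [add_sub_cancel] at h1 h2
    funext i
    fin_cases i
    · exact sub_eq_zero.1 h2.1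
    · exact sub_eq_zero.1 h2.2
    · exact sub_eq_zero.1 h1.1
    · exact sub_eq_zero.1 h1.2
  have hγ : HasDerivAt (fun u : ℝ => (u, x)) ((1 : ℝ), (0 : ℝ)) t :=
    (hasDerivAt_id t).prodMk (hasDerivAt_const t x)
  have hD : HasDerivWithinAt (fun u => r (u, x)) (fderiv ℝ r (t, x) (1, 0)) (Ici t) t :=
    ((hd (t, x)).hasFDerivAt.comp_hasDerivAt t hγ).hasDerivWithinAt
  have h0 : HasDerivWithinAt (fun u => r (u, x)) 0 (Ici t) t :=
    (hasDerivWithinAt_const t (Ici t) (r (t, x))).congr hconst rfl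
  exact (uniqueDiffOn_Ici t t self_mem_Ici).eq_deriv _ hD h0
end
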